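/- arXiv:1901.10089 — 5 statements merged into one kernel-verified Lean document; each statement's English description precedes it below -/
import Mathlib

section
/- Let n ≥ 1, let w_{ij} ≥ 0 (i,j = 1,…,n) be nonnegative weights, let β ≥ 0, let g : ℝ → ℝ be strictly increasing, and let h : {1,…,n} → ℝ be arbitrary. If z : {1,…,n} → ℝ satisfies −β Δ_Γ z(i) − ( g(z(i) + h(i)) − g(h(i)) ) ≥ 0 for every i = 1,…,n, then z(i) ≤ 0 for every i = 1,…,n. -/
open Finset

/-- Maximum principle for the graph Laplacian
`Δ_Γ z i = ∑ j, w i j * (z i - z j)`: if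
`-β * Δ_Γ z i - (g (z i + h i) - g (h i)) ≥ 0` for every `i`,
with `w` nonnegative, `β ≥ 0` and `g` strictly increasing, then `z ≤ 0`. -/
theorem graph_maximum_principle
    (n : ℕ) (hn : 1 ≤ n) (w : Fin n → Fin n → ℝ) (hw : ∀ i j, 0 ≤ w i j)
    (β : ℝ) (hβ : 0 ≤ β) (g : ℝ → ℝ) (hg : StrictMono g)
    (h z : Fin n → ℝ)
    (hz : ∀ i, 0 ≤ -β * (∑ j, w i j * (z i - z j)) - (g (z i + h i) - g (h i))) :
    ∀ i, z i ≤ 0 := by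
  have : Nonempty (Fin n) := ⟨⟨0, hn⟩⟩
  obtain ⟨k, hk⟩ := Finite.exists_max z
  suffices hzk : z k ≤ 0 from fun i => (hk i).trans hzk
  have hsum : 0 ≤ ∑ j, w k j * (z k - z j) :=
    sum_nonneg fun j _ => mul_nonneg (hw k j) (sub_nonneg.mpr (hk j))
  have hle : g (z k + h k) ≤ g (h k) := by
    linarith [hz k, mul_nonneg hβ hsum]
  linarith [hg.le_iff_le.mp hle]
end

section
/- Let n ≥ 1, let w_{ij} ≥ 0 (i,j = 1,…,n) be nonnegative weights, let β ≥ 0, let g : ℝ → ℝ be strictly increasing, and let y : {1,…,n} → ℝ. If u₁, u₂ : {1,…,n} → ℝ both satisfy β Δ_Γ u(i) + g(u(i) − y(i)) = 0 for every i = 1,…,n, then u₁ = u₂. In other words, the semi-linear graph PDE β Δ_Γ u + g(u − y) = 0 has at most one solution. -/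
open Finset

/-- Comparison principle for the operator `u ↦ β Δ_Γ u + g (u - y)` on a finite weighted graph. -/
theorem graph_pde_comparison {ι : Type*} [Fintype ι] {w : ι → ι → ℝ} (hw : ∀ i j, 0 ≤ w i j)
    {β : ℝ} (hβ : 0 ≤ β) {g : ℝ → ℝ} (hg : StrictMono g) {y u v : ι → ℝ}
    (h : ∀ i, β * (∑ j, w i j * (u i - u j)) + g (u i - y i) ≤
      β * (∑ j, w i j * (v i - v j)) + g (v i - y i)) :
    u ≤ v := by
  intro i
  have : Nonempty ι := ⟨i⟩
  obtain ⟨m, hm⟩ := Finite.exists_max fun k => u k - v k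
  have hlap : ∑ j, w m j * (v m - v j) ≤ ∑ j, w m j * (u m - u j) :=
    sum_le_sum fun j _ => mul_le_mul_of_nonneg_left (by linarith [hm j]) (hw m j)
  have hgm : g (u m - y m) ≤ g (v m - y m) := by
    linarith [h m, mul_le_mul_of_nonneg_left hlap hβ]
  linarith [hm i, hg.le_iff_le.mp hgm]

/-- Uniqueness of solutions of the semi-linear graph PDE
`β Δ_Γ u + g (u - y) = 0`, where `Δ_Γ u i = ∑ j, w i j * (u i - u j)`,
with nonnegative weights `w`, `β ≥ 0`, and `g` strictly increasing. -/
theorem graph_pde_uniqueness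
    (n : ℕ) (hn : 1 ≤ n) (w : Fin n → Fin n → ℝ) (hw : ∀ i j, 0 ≤ w i j)
    (β : ℝ) (hβ : 0 ≤ β) (g : ℝ → ℝ) (hg : StrictMono g) (y : Fin n → ℝ)
    (u₁ u₂ : Fin n → ℝ)
    (h₁ : ∀ i, β * (∑ j, w i j * (u₁ i - u₁ j)) + g (u₁ i - y i) = 0)
    (h₂ : ∀ i, β * (∑ j, w i j * (u₂ i - u₂ j)) + g (u₂ i - y i) = 0) :
    u₁ = u₂ :=
  le_antisymm (graph_pde_comparison hw hβ hg fun i => ((h₁ i).trans (h₂ i).symm).le)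
    (graph_pde_comparison hw hβ hg fun i => ((h₂ i).trans (h₁ i).symm).le)
end

section
/- Let m ≥ 1 and let η : [0,∞) → [0,∞) be measurable, bounded, vanishing outside [0,1], and normalized so that ∫_{ℝ^m} η(|z|) dz = 1; set τ_η := ∫_{ℝ^m} |z₁|² η(|z|) dz and assume τ_η > 0. Let h : ℝ^m → ℝ be three times continuously differentiable with sup_{x∈ℝ^m} ‖D³h(x)‖ =: M₃ < ∞. Then there exists a constant C depending only on m and η, and depending at most linearly on M₃ (one may take C = M₃/(3τ_η)), such that for every ε ∈ (0,1] and every x ∈ ℝ^m, | (2/(τ_η ε^{m+2})) ∫_{ℝ^m} η(|x − y|/ε) (h(x) − h(y)) dy + Δh(x) | ≤ C ε, where Δh = ∑_{k=1}^m ∂²h/∂x_k² is the Euclidean Laplacian. -/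
open MeasureTheory Finset

/-- Second-order Taylor expansion of a `C³` function with the sharp constant in the remainder. -/
theorem ContDiff.abs_sub_taylor_two_le {E : Type*} [NormedAddCommGroup E] [NormedSpace ℝ E]
    {h : E → ℝ} (hh : ContDiff ℝ 3 h) {M : ℝ} (hM : ∀ x, ‖iteratedFDeriv ℝ 3 h x‖ ≤ M)
    (x v : E) :
    |h (x + v) - h x - fderiv ℝ h x v - 1 / 2 * iteratedFDeriv ℝ 2 h x (fun _ => v)|
      ≤ M / 6 * ‖v‖ ^ 3 := by
  have taylor := map_add_eq_sum_add_integral_iteratedFDeriv (f := h) (x := x) (y := v) (n := 2)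
    (fun t _ => by simpa [show (2 : WithTop ℕ∞) + 1 = 3 by norm_num] using hh.contDiffAt)
  have bound : ‖∫ t in (0 : ℝ)..1, (1 - t) ^ 2 • iteratedFDeriv ℝ 3 h (x + t • v) (fun _ => v)‖
      ≤ ∫ t in (0 : ℝ)..1, (1 - t) ^ 2 * (M * ‖v‖ ^ 3) := by
    apply intervalIntegral.norm_integral_le_of_norm_le zero_le_one
    · refine Filter.Eventually.of_forall fun t _ => ?_
      rw [norm_smul, Real.norm_of_nonneg (sq_nonneg _)]
      gcongr
      calc _ ≤ ‖iteratedFDeriv ℝ 3 h (x + t • v)‖ * ∏ _i : Fin 3, ‖v‖ :=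
            ContinuousMultilinearMap.le_opNorm _ _
        _ ≤ M * ‖v‖ ^ 3 := by
            rw [Finset.prod_const, Finset.card_fin]
            gcongr
            exact hM _
    · exact Continuous.intervalIntegrable (by fun_prop) _ _
  have weight : ∫ t in (0 : ℝ)..1, (1 - t) ^ 2 * (M * ‖v‖ ^ 3) = M * ‖v‖ ^ 3 / 3 := by
    rw [intervalIntegral.integral_mul_const,
      intervalIntegral.integral_comp_sub_left (fun t : ℝ => t ^ 2) 1]
    norm_num
    ring
  rw [weight, Real.norm_eq_abs] at bound
  simp only [Finset.sum_range_succ, Finset.sum_range_zero, Nat.reduceAdd] at taylor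
  rw [taylor]
  simp only [iteratedFDeriv_zero_apply, iteratedFDeriv_one_apply, Nat.factorial, smul_eq_mul,
    Nat.cast_one, Nat.succ_eq_add_one, zero_add, mul_one, inv_one, one_mul, Nat.reduceAdd,
    Nat.cast_ofNat] at bound ⊢
  rw [abs_le] at bound ⊢
  constructor <;> linarith [bound.1, bound.2]

/-- A bounded measurable radial kernel supported in the unit ball is integrable against every
continuous function. -/
theorem integrable_radial_mul_continuous {E : Type*} [NormedAddCommGroup E] [NormedSpace ℝ E]
    [FiniteDimensional ℝ E] [MeasurableSpace E] [BorelSpace E] {μ : Measure E}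
    [IsFiniteMeasureOnCompacts μ] {η : ℝ → ℝ}
    (hmeas : Measurable η) (hnonneg : ∀ t, 0 ≤ η t) (hbdd : ∃ B : ℝ, ∀ t, η t ≤ B)
    (hsupp : ∀ t : ℝ, 1 < t → η t = 0) {w : E → ℝ} (hw : Continuous w) :
    Integrable (fun v => η ‖v‖ * w v) μ := by
  obtain ⟨B, hB⟩ := hbdd
  have hsub : Function.support (fun v => η ‖v‖ * w v) ⊆ Metric.closedBall (0 : E) 1 := by
    intro v hv
    rw [mem_closedBall_zero_iff]
    by_contra! hlt
    exact hv (by simp [hsupp _ hlt])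
  rw [← integrableOn_iff_integrable_of_support_subset hsub]
  have hball : IntegrableOn w (Metric.closedBall (0 : E) 1) μ :=
    hw.continuousOn.integrableOn_compact (isCompact_closedBall 0 1)
  refine Integrable.bdd_mul (c := B) hball (hmeas.comp measurable_norm).aestronglyMeasurable ?_
  exact Filter.Eventually.of_forall fun v => by
    simpa [abs_of_nonneg (hnonneg ‖v‖)] using hB ‖v‖

/-- The first moments of a radial kernel vanish. -/
theorem integral_radial_mul_linear {E : Type*} [NormedAddCommGroup E] [NormedSpace ℝ E]
    [MeasurableSpace E] [BorelSpace E] (μ : Measure E) [μ.IsNegInvariant] (η : ℝ → ℝ)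
    (L : E →L[ℝ] ℝ) : ∫ v, η ‖v‖ * L v ∂μ = 0 := by
  have := integral_neg_eq_self (fun v => η ‖v‖ * L v) μ
  simp only [norm_neg, map_neg, mul_neg, integral_neg] at this
  linarith

section RadialMoments

variable {ι : Type*} [Fintype ι] [DecidableEq ι]

/-- Mixed second moments of a radial kernel vanish. -/
theorem integral_radial_mul_coord_mul_coord (η : ℝ → ℝ) {i j : ι} (hij : i ≠ j) :
    ∫ v : EuclideanSpace ℝ ι, η ‖v‖ * (v i * v j) = 0 := by
  let flip : EuclideanSpace ℝ ι ≃ₗᵢ[ℝ] EuclideanSpace ℝ ι :=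
    LinearIsometryEquiv.piLpCongrRight 2
      (fun k => if k = i then LinearIsometryEquiv.neg ℝ else LinearIsometryEquiv.refl ℝ ℝ)
  have hi (v : EuclideanSpace ℝ ι) : flip v i = -v i := by simp [flip]
  have hj (v : EuclideanSpace ℝ ι) : flip v j = v j := by simp [flip, hij.symm]
  have := flip.measurePreserving.integral_comp flip.toHomeomorph.measurableEmbedding
    (fun v => η ‖v‖ * (v i * v j))
  simp only [flip.norm_map, hi, hj, neg_mul, mul_neg, integral_neg] at this
  linarith

/-- All pure second moments of a radial kernel agree. -/
theorem integral_radial_mul_coord_sq (η : ℝ → ℝ) (i j : ι) :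
    ∫ v : EuclideanSpace ℝ ι, η ‖v‖ * (v i * v i) =
      ∫ v : EuclideanSpace ℝ ι, v j ^ 2 * η ‖v‖ := by
  let swap : EuclideanSpace ℝ ι ≃ₗᵢ[ℝ] EuclideanSpace ℝ ι :=
    LinearIsometryEquiv.piLpCongrLeft 2 ℝ ℝ (Equiv.swap i j)
  have hi (v : EuclideanSpace ℝ ι) : swap v i = v j := by
    simp [swap, LinearIsometryEquiv.piLpCongrLeft_apply, Equiv.piCongrLeft']
  rw [← swap.measurePreserving.integral_comp swap.toHomeomorph.measurableEmbedding
    (fun v => η ‖v‖ * (v i * v i))]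
  simp only [swap.norm_map, hi]
  exact integral_congr_ae (Filter.Eventually.of_forall fun v => by ring)

/-- A radial kernel integrates a quadratic form to its second moment times the trace. -/
theorem integral_radial_mul_quadratic {η : ℝ → ℝ}
    (hmeas : Measurable η) (hnonneg : ∀ t, 0 ≤ η t) (hbdd : ∃ B : ℝ, ∀ t, η t ≤ B)
    (hsupp : ∀ t : ℝ, 1 < t → η t = 0)
    (B : EuclideanSpace ℝ ι →L[ℝ] EuclideanSpace ℝ ι →L[ℝ] ℝ) (j : ι) :
    ∫ v : EuclideanSpace ℝ ι, η ‖v‖ * B v v =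
      (∫ v : EuclideanSpace ℝ ι, v j ^ 2 * η ‖v‖) *
        ∑ k, B (EuclideanSpace.single k 1) (EuclideanSpace.single k 1) := by
  have expand (v : EuclideanSpace ℝ ι) : η ‖v‖ * B v v =
      ∑ k, ∑ l, η ‖v‖ * (v k * v l) *
        B (EuclideanSpace.single k 1) (EuclideanSpace.single l 1) := by
    have hv : v = ∑ k, v k • EuclideanSpace.single k (1 : ℝ) := by
      simpa using ((EuclideanSpace.basisFun ι ℝ).sum_repr v).symm
    conv_lhs => rw [show B v v = B (∑ k, v k • EuclideanSpace.single k (1 : ℝ))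
      (∑ k, v k • EuclideanSpace.single k (1 : ℝ)) by rw [← hv]]
    simp only [map_sum, map_smul, _root_.sum_apply, _root_.smul_apply,
      smul_eq_mul, Finset.mul_sum]
    refine Finset.sum_comm.trans
      (Finset.sum_congr rfl fun k _ => Finset.sum_congr rfl fun l _ => ?_)
    ring
  have hint (k l : ι) : Integrable (fun v : EuclideanSpace ℝ ι => η ‖v‖ * (v k * v l) *
      B (EuclideanSpace.single k 1) (EuclideanSpace.single l 1)) :=
    (integrable_radial_mul_continuous hmeas hnonneg hbdd hsupp (by fun_prop)).mul_const _
  simp_rw [expand]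
  rw [integral_finsetSum _ fun k _ => integrable_finsetSum _ fun l _ => hint k l, Finset.mul_sum]
  refine Finset.sum_congr rfl fun k _ => ?_
  rw [integral_finsetSum _ fun l _ => hint k l, Finset.sum_eq_single k]
  · rw [integral_mul_const, integral_radial_mul_coord_sq η k j]
  · intro l _ hl
    rw [integral_mul_const, integral_radial_mul_coord_mul_coord η hl.symm, zero_mul]
  · simp

end RadialMoments

/-- Rescaling of the nonlocal integral to the unit scale. -/
theorem integral_radial_scaled_eq {E : Type*} [NormedAddCommGroup E] [NormedSpace ℝ E]
    [FiniteDimensional ℝ E] [MeasurableSpace E] [BorelSpace E] (μ : Measure E)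
    [μ.IsAddHaarMeasure] (η : ℝ → ℝ) (g : E → ℝ) (x : E) {ε : ℝ} (hε : 0 < ε) :
    ∫ y, η (‖x - y‖ / ε) * g y ∂μ =
      ε ^ Module.finrank ℝ E * ∫ v, η ‖v‖ * g (x + ε • v) ∂μ := by
  rw [← smul_eq_mul, ← Measure.integral_comp_inv_smul_of_nonneg μ
    (fun v => η ‖v‖ * g (x + ε • v)) hε.le, ← integral_add_left_eq_self _ x]
  refine integral_congr_ae (Filter.Eventually.of_forall fun v => ?_)
  simp only [smul_inv_smul₀ hε.ne', norm_smul, norm_inv, Real.norm_of_nonneg hε.le,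
    sub_add_cancel_left, norm_neg, div_eq_inv_mul]

/-- Euclidean nonlocal-to-local consistency estimate: for a bounded measurable
normalized kernel `η` supported in `[0,1]` with second moment `τ_η > 0`, and a
`C³` function `h` with `‖D³h‖ ≤ M₃`, the nonlocal operator
`ℒ_ε h(x) = (2/(τ_η ε^{m+2})) ∫ η(|x-y|/ε) (h(x) - h(y)) dy`
approximates `-Δh` with error at most `(M₃/(3 τ_η)) ε` for every `ε ∈ (0,1]`. -/
theorem nonlocal_laplacian_consistency
    (m : ℕ) (hm : 1 ≤ m) (η : ℝ → ℝ)
    (hmeas : Measurable η) (hnonneg : ∀ t, 0 ≤ η t)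
    (hbdd : ∃ B : ℝ, ∀ t, η t ≤ B) (hsupp : ∀ t : ℝ, 1 < t → η t = 0)
    (hnorm : ∫ v : EuclideanSpace ℝ (Fin m), η ‖v‖ = 1)
    (τ : ℝ) (hτ : τ = ∫ v : EuclideanSpace ℝ (Fin m), (v ⟨0, hm⟩) ^ 2 * η ‖v‖)
    (hτpos : 0 < τ)
    (h : EuclideanSpace ℝ (Fin m) → ℝ) (hh : ContDiff ℝ 3 h)
    (M₃ : ℝ) (hM₃ : ∀ x, ‖iteratedFDeriv ℝ 3 h x‖ ≤ M₃) :
    ∀ ε ∈ Set.Ioc (0:ℝ) 1, ∀ x : EuclideanSpace ℝ (Fin m),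
      |(2 / (τ * ε ^ (m + 2))) *
          (∫ y : EuclideanSpace ℝ (Fin m), η (‖x - y‖ / ε) * (h x - h y)) +
        ∑ k : Fin m,
          iteratedFDeriv ℝ 2 h x (fun _ => EuclideanSpace.single k (1:ℝ))|
        ≤ (M₃ / (3 * τ)) * ε := by
  intro ε ⟨hε, _⟩ x
  set Δ := ∑ k : Fin m, iteratedFDeriv ℝ 2 h x (fun _ => EuclideanSpace.single k (1 : ℝ)) with hΔ
  let Q (v : EuclideanSpace ℝ (Fin m)) : ℝ := iteratedFDeriv ℝ 2 h x (fun _ => v)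
  have hcont : Continuous h := hh.continuous
  have hint {w : EuclideanSpace ℝ (Fin m) → ℝ} (hw : Continuous w) :
      Integrable (fun v => η ‖v‖ * w v) :=
    integrable_radial_mul_continuous hmeas hnonneg hbdd hsupp hw
  have hQcont : Continuous Q := by
    simp only [Q, iteratedFDeriv_two_apply]
    fun_prop
  have hQ : ∫ v, η ‖v‖ * Q v = τ * Δ := by
    simp only [Q, hΔ, hτ, iteratedFDeriv_two_apply]
    exact integral_radial_mul_quadratic hmeas hnonneg hbdd hsupp _ _
  have hL : ∫ v, η ‖v‖ * fderiv ℝ h x v = 0 := integral_radial_mul_linear volume η _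
  set I := ∫ v : EuclideanSpace ℝ (Fin m), η ‖v‖ * (h x - h (x + ε • v)) with hI
  have split : I + ε ^ 2 / 2 * (τ * Δ) = ∫ v : EuclideanSpace ℝ (Fin m),
      η ‖v‖ * (h x - h (x + ε • v) + ε * fderiv ℝ h x v + ε ^ 2 / 2 * Q v) := by
    have hsum : I + ε ^ 2 / 2 * (τ * Δ) = I + ε * (∫ v, η ‖v‖ * fderiv ℝ h x v)
        + ε ^ 2 / 2 * ∫ v, η ‖v‖ * Q v := by rw [hL, hQ]; ring
    have i₀ := hint (w := fun v => h x - h (x + ε • v)) (by fun_prop)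
    have i₁ := (hint (fderiv ℝ h x).continuous).const_mul ε
    rw [hsum, hI, ← integral_const_mul, ← integral_const_mul, ← integral_add i₀ i₁,
      ← integral_add (by exact i₀.add i₁) ((hint hQcont).const_mul _)]
    exact integral_congr_ae (Filter.Eventually.of_forall fun v => by ring)
  have remainder : |I + ε ^ 2 / 2 * (τ * Δ)| ≤ M₃ / 6 * ε ^ 3 := by
    rw [split, ← Real.norm_eq_abs]
    have hone : Integrable (fun v : EuclideanSpace ℝ (Fin m) => η ‖v‖) := by
      simpa using hint (w := fun _ => 1) continuous_const
    calc _ ≤ ∫ v : EuclideanSpace ℝ (Fin m), η ‖v‖ * (M₃ / 6 * ε ^ 3) := by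
          refine norm_integral_le_of_norm_le (hone.mul_const _)
            (Filter.Eventually.of_forall fun v => ?_)
          rw [norm_mul, Real.norm_of_nonneg (hnonneg _), Real.norm_eq_abs]
          rcases lt_or_ge 1 ‖v‖ with hv | hv
          · simp [hsupp _ hv]
          refine mul_le_mul_of_nonneg_left ?_ (hnonneg _)
          have hM : 0 ≤ M₃ := (norm_nonneg _).trans (hM₃ x)
          have hQs : iteratedFDeriv ℝ 2 h x (fun _ => ε • v) = ε ^ 2 * Q v := by
            simpa using (iteratedFDeriv ℝ 2 h x).map_smul_univ (fun _ => ε) (fun _ => v)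
          have taylor := hh.abs_sub_taylor_two_le hM₃ x (ε • v)
          rw [hQs, map_smul, smul_eq_mul, norm_smul, Real.norm_of_nonneg hε.le] at taylor
          rw [← abs_neg]
          refine le_trans (le_of_eq ?_) (taylor.trans ?_)
          · congr 1
            ring
          · gcongr
            exact mul_le_of_le_one_right hε.le hv
      _ = _ := by rw [integral_mul_const, hnorm, one_mul]
  rw [integral_radial_scaled_eq volume η (fun y => h x - h y) x hε, finrank_euclideanSpace_fin, ← hI]
  have factor : 2 / (τ * ε ^ (m + 2)) * (ε ^ m * I) + Δ =
      2 / (τ * ε ^ 2) * (I + ε ^ 2 / 2 * (τ * Δ)) := by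
    rw [pow_add]
    field_simp
  rw [factor, abs_mul, abs_of_pos (by positivity)]
  calc _ ≤ 2 / (τ * ε ^ 2) * (M₃ / 6 * ε ^ 3) := by gcongr
    _ = M₃ / (3 * τ) * ε := by field_simp; ring
end

section
/- Let f : ℝ → ℝ be continuous and strictly increasing with f(0) = 0, let σ > 0, and let p : ℝ → [0,∞) be a probability density (∫_ℝ p(s) ds = 1) with p(s) = 0 for |s| > σ. Then there exists a unique t* ∈ ℝ such that ∫_ℝ f(t* − s) p(s) ds = 0, and moreover t* ∈ [−σ, σ]. -/
open MeasureTheory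

/-- On a bounded range of `t`, the integrand `f (t - s) * p s` is dominated by a multiple of `p`. -/
theorem norm_comp_sub_mul_le_of_support {f p : ℝ → ℝ} (hf : Monotone f) {σ : ℝ}
    (hp_nonneg : ∀ s, 0 ≤ p s) (hp_supp : ∀ s : ℝ, σ < |s| → p s = 0)
    {R t : ℝ} (ht : |t| ≤ R) (s : ℝ) :
    ‖f (t - s) * p s‖ ≤ (|f (R + σ)| + |f (-(R + σ))|) * p s := by
  rcases lt_or_ge σ |s| with hs | hs
  · simp [hp_supp s hs]
  · rw [norm_mul, Real.norm_eq_abs, Real.norm_eq_abs, abs_of_nonneg (hp_nonneg s)]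
    refine mul_le_mul_of_nonneg_right ?_ (hp_nonneg s)
    obtain ⟨ht₁, ht₂⟩ := abs_le.mp ht
    obtain ⟨hs₁, hs₂⟩ := abs_le.mp hs
    have h_upper : f (t - s) ≤ f (R + σ) := hf (by linarith)
    have h_lower : f (-(R + σ)) ≤ f (t - s) := hf (by linarith)
    rw [abs_le]
    constructor
    · linarith [neg_abs_le (f (-(R + σ))), abs_nonneg (f (R + σ))]
    · linarith [le_abs_self (f (R + σ)), abs_nonneg (f (-(R + σ)))]

theorem integrable_comp_sub_mul_of_support {f p : ℝ → ℝ} (hf_cont : Continuous f)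
    (hf : Monotone f) {σ : ℝ} (hp_nonneg : ∀ s, 0 ≤ p s) (hp_int : Integrable p)
    (hp_supp : ∀ s : ℝ, σ < |s| → p s = 0) (t : ℝ) :
    Integrable fun s => f (t - s) * p s :=
  (hp_int.const_mul _).mono'
    ((hf_cont.comp (continuous_const.sub continuous_id)).aestronglyMeasurable.mul
      hp_int.aestronglyMeasurable)
    (.of_forall (norm_comp_sub_mul_le_of_support hf hp_nonneg hp_supp le_rfl))

theorem continuous_integral_comp_sub_mul_of_support {f p : ℝ → ℝ} (hf_cont : Continuous f)
    (hf : Monotone f) {σ : ℝ} (hp_nonneg : ∀ s, 0 ≤ p s) (hp_int : Integrable p)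
    (hp_supp : ∀ s : ℝ, σ < |s| → p s = 0) :
    Continuous fun t => ∫ s, f (t - s) * p s := by
  refine continuous_iff_continuousAt.mpr fun t₀ => ?_
  refine continuousAt_of_dominated
    (bound := fun s => (|f (|t₀| + 1 + σ)| + |f (-(|t₀| + 1 + σ))|) * p s)
    (.of_forall fun t => (integrable_comp_sub_mul_of_support hf_cont hf hp_nonneg hp_int
      hp_supp t).aestronglyMeasurable) ?_ (hp_int.const_mul _)
    (.of_forall fun s => by fun_prop)
  have h_near : ∀ᶠ t in nhds t₀, |t| < |t₀| + 1 :=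
    continuous_abs.continuousAt.eventually_lt continuousAt_const (lt_add_one _)
  filter_upwards [h_near] with t ht
  exact .of_forall (norm_comp_sub_mul_le_of_support hf hp_nonneg hp_supp ht.le)

theorem strictMono_integral_comp_sub_mul {f p : ℝ → ℝ} (hf : StrictMono f)
    (hp_nonneg : ∀ s, 0 ≤ p s) (hp_ne : ∫ s, p s ≠ 0)
    (h_int : ∀ t, Integrable fun s => f (t - s) * p s) :
    StrictMono fun t => ∫ s, f (t - s) * p s := by
  intro a b hab
  have h_lt : ∀ s, f (a - s) < f (b - s) := fun s => hf (by linarith)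
  have h_le : ∀ s, f (a - s) * p s ≤ f (b - s) * p s := fun s =>
    mul_le_mul_of_nonneg_right (h_lt s).le (hp_nonneg s)
  refine lt_of_le_of_ne (integral_mono (h_int a) (h_int b) h_le) fun h_eq => hp_ne ?_
  have h_ae := (integral_eq_iff_of_ae_le (h_int a) (h_int b) (.of_forall h_le)).mp h_eq
  refine integral_eq_zero_of_ae ?_
  filter_upwards [h_ae] with s hs
  exact (mul_eq_mul_right_iff.mp hs).resolve_left (h_lt s).ne

/-- Well-posedness of the modified trend value: if `f` is continuous, strictly
increasing with `f 0 = 0`, and `p` is a probability density supported in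
`[-σ, σ]`, then there is a unique `t*` with `∫ f(t* - s) p(s) ds = 0`, and
moreover `t* ∈ [-σ, σ]`. -/
theorem modified_trend_well_posed
    (f : ℝ → ℝ) (hf_cont : Continuous f) (hf_mono : StrictMono f)
    (hf0 : f 0 = 0) (σ : ℝ) (hσ : 0 < σ) (p : ℝ → ℝ)
    (hp_meas : Measurable p) (hp_nonneg : ∀ s, 0 ≤ p s)
    (hp_int : Integrable p) (hp_one : ∫ s, p s = 1)
    (hp_supp : ∀ s : ℝ, σ < |s| → p s = 0) :
    ∃ t : ℝ, (∫ s, f (t - s) * p s = 0) ∧ t ∈ Set.Icc (-σ) σ ∧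
      ∀ t' : ℝ, (∫ s, f (t' - s) * p s = 0) → t' = t := by
  have h_int := integrable_comp_sub_mul_of_support hf_cont hf_mono.monotone hp_nonneg hp_int
    hp_supp
  have h_cont := continuous_integral_comp_sub_mul_of_support hf_cont hf_mono.monotone hp_nonneg
    hp_int hp_supp
  have h_mono := strictMono_integral_comp_sub_mul hf_mono hp_nonneg (by simp [hp_one]) h_int
  have h_left : ∫ s, f (-σ - s) * p s ≤ 0 := integral_nonpos fun s => by
    rcases lt_or_ge σ |s| with hs | hs
    · simp [hp_supp s hs]
    · refine mul_nonpos_of_nonpos_of_nonneg ?_ (hp_nonneg s)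
      exact hf0 ▸ hf_mono.monotone (by linarith [(abs_le.mp hs).1])
  have h_right : 0 ≤ ∫ s, f (σ - s) * p s := integral_nonneg fun s => by
    rcases lt_or_ge σ |s| with hs | hs
    · simp [hp_supp s hs]
    · refine mul_nonneg ?_ (hp_nonneg s)
      exact hf0 ▸ hf_mono.monotone (by linarith [(abs_le.mp hs).2])
  obtain ⟨t, ht_mem, ht⟩ :=
    intermediate_value_Icc (by linarith : -σ ≤ σ) h_cont.continuousOn ⟨h_left, h_right⟩
  exact ⟨t, ht, ht_mem, fun t' ht' => h_mono.injective (ht'.trans ht.symm)⟩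
end

section
/- Let m, q ≥ 1, let r ∈ (0,1], and let x₁,…,x_q be independent random points, each uniformly distributed on the unit cube [0,1]^m. For l = 1,…,q let V_l := { x ∈ ℝ^m : |x − x_l| ≤ |x − x_j| for all j = 1,…,q } be the l-th Voronoi cell of the sample. Then with probability at least 1 − r^{−m} exp(−q r^m), every cell satisfies diam( V_l ∩ [0,1]^m ) ≤ 4√m · r, where diam denotes the Euclidean diameter. -/
open MeasureTheory

theorem exists_fin_mem_Icc_div {N : ℕ} (hN : 0 < N) {t : ℝ} (ht : t ∈ Set.Icc (0 : ℝ) 1) :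
    ∃ k : Fin N, t ∈ Set.Icc ((k : ℝ) / N) (((k : ℝ) + 1) / N) := by
  have hN' : (0 : ℝ) < N := by exact_mod_cast hN
  simp only [Set.mem_Icc, div_le_iff₀ hN', le_div_iff₀ hN']
  have h0 : 0 ≤ t * N := mul_nonneg ht.1 hN'.le
  by_cases h : ⌊t * N⌋₊ < N
  · exact ⟨⟨_, h⟩, Nat.floor_le h0, (Nat.lt_floor_add_one _).le⟩
  · have hle : (N : ℝ) ≤ t * N := (Nat.le_floor_iff h0).1 (not_lt.1 h)
    refine ⟨⟨N - 1, by omega⟩, ?_⟩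
    simp only [Nat.cast_pred hN]
    constructor <;> nlinarith [ht.2]

namespace EuclideanSpace

variable {ι : Type*}

/-- The closed coordinate box with corners `a` and `b`. -/
def box (a b : ι → ℝ) : Set (EuclideanSpace ℝ ι) := {x | ∀ i, x i ∈ Set.Icc (a i) (b i)}

theorem box_eq_preimage_ofLp (a b : ι → ℝ) :
    box a b = WithLp.ofLp ⁻¹' Set.Icc a b := by
  ext x
  simp [box, Pi.le_def, forall_and]

theorem measurableSet_box [Fintype ι] (a b : ι → ℝ) : MeasurableSet (box a b) := by
  rw [box_eq_preimage_ofLp]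
  exact (PiLp.volume_preserving_ofLp ι).measurable measurableSet_Icc

theorem volume_box [Fintype ι] (a b : ι → ℝ) :
    volume (box a b) = ∏ i, ENNReal.ofReal (b i - a i) := by
  rw [box_eq_preimage_ofLp, (PiLp.volume_preserving_ofLp ι).measure_preimage
    measurableSet_Icc.nullMeasurableSet, Real.volume_Icc_pi]

theorem dist_le_of_mem_box [Fintype ι] {a b : ι → ℝ} {d : ℝ} (hd : 0 ≤ d)
    (hab : ∀ i, b i - a i ≤ d) {x y : EuclideanSpace ℝ ι} (hx : x ∈ box a b) (hy : y ∈ box a b) :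
    dist x y ≤ √(Fintype.card ι) * d := by
  rw [EuclideanSpace.dist_eq]
  refine Real.sqrt_le_iff.2 ⟨by positivity, ?_⟩
  calc ∑ i, dist (x i) (y i) ^ 2 ≤ ∑ _i : ι, d ^ 2 := by
        gcongr with i
        exact (Real.dist_le_of_mem_Icc (hx i) (hy i)).trans (hab i)
    _ = (√(Fintype.card ι) * d) ^ 2 := by
        simp [mul_pow]

/-- The cell with index `k` in the subdivision of the unit cube into `N ^ card ι` equal cubes. -/
def gridCell (N : ℕ) (k : ι → Fin N) : Set (EuclideanSpace ℝ ι) :=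
  box (fun i => (k i : ℝ) / N) (fun i => ((k i : ℝ) + 1) / N)

theorem volume_gridCell [Fintype ι] (N : ℕ) (k : ι → Fin N) :
    volume (gridCell N k) = ENNReal.ofReal ((1 / (N : ℝ)) ^ Fintype.card ι) := by
  rw [gridCell, volume_box, ENNReal.ofReal_pow (by positivity)]
  simp [← sub_div]

theorem gridCell_subset_unitCube {N : ℕ} (hN : 0 < N) (k : ι → Fin N) :
    gridCell N k ⊆ box 0 1 := by
  have hN' : (0 : ℝ) < N := by exact_mod_cast hN
  intro x hx i
  have hk : (k i : ℝ) + 1 ≤ N := by exact_mod_cast (k i).isLt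
  exact ⟨(by positivity : (0 : ℝ) ≤ (k i : ℝ) / N).trans (hx i).1,
    (hx i).2.trans ((div_le_one hN').2 hk)⟩

theorem dist_le_of_mem_gridCell [Fintype ι] {N : ℕ} {k : ι → Fin N}
    {x y : EuclideanSpace ℝ ι} (hx : x ∈ gridCell N k) (hy : y ∈ gridCell N k) :
    dist x y ≤ √(Fintype.card ι) * (1 / N) :=
  dist_le_of_mem_box (by positivity) (fun i => by rw [← sub_div, add_sub_cancel_left]) hx hy

theorem exists_mem_gridCell {N : ℕ} (hN : 0 < N) {x : EuclideanSpace ℝ ι} (hx : x ∈ box 0 1) :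
    ∃ k : ι → Fin N, x ∈ gridCell N k := by
  choose k hk using fun i => exists_fin_mem_Icc_div hN (hx i)
  exact ⟨k, hk⟩

/-- If a sample meets every grid cell, then its Voronoi cells inside the unit cube have
diameter at most twice that of a grid cell. -/
theorem diam_voronoi_inter_unitCube_le [Fintype ι] {κ : Type*} {N : ℕ} (hN : 0 < N)
    {ω : κ → EuclideanSpace ℝ ι} (hω : ∀ k : ι → Fin N, ∃ j, ω j ∈ gridCell N k) (l : κ) :
    Metric.diam ({x | ∀ j, dist x (ω l) ≤ dist x (ω j)} ∩ box 0 1) ≤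
      2 * (√(Fintype.card ι) * (1 / N)) := by
  have key : ∀ x ∈ {x | ∀ j, dist x (ω l) ≤ dist x (ω j)} ∩ box 0 1,
      dist x (ω l) ≤ √(Fintype.card ι) * (1 / N) := by
    rintro x ⟨hx, hxc⟩
    obtain ⟨k, hk⟩ := exists_mem_gridCell hN hxc
    obtain ⟨j, hj⟩ := hω k
    exact (hx j).trans (dist_le_of_mem_gridCell hk hj)
  refine Metric.diam_le_of_forall_dist_le (by positivity) fun x hx y hy => ?_
  linarith [dist_triangle_right x y (ω l), key x hx, key y hy]

end EuclideanSpace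

/-- The probability that `q` independent samples from `μ` all miss a set of mass at least `p` is
at most `exp (-q p)`. -/
theorem MeasureTheory.Measure.pi_forall_notMem_le {α : Type*} [MeasurableSpace α]
    (μ : Measure α) [IsProbabilityMeasure μ] (q : ℕ) {s : Set α} (hs : MeasurableSet s) {p : ℝ}
    (hp : ENNReal.ofReal p ≤ μ s) :
    Measure.pi (fun _ : Fin q => μ) {ω | ∀ j, ω j ∉ s} ≤
      ENNReal.ofReal (Real.exp (-(q : ℝ) * p)) := by
  have hset : {ω : Fin q → α | ∀ j, ω j ∉ s} = Set.univ.pi fun _ => sᶜ := by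
    ext ω
    simp
  have hexp : Real.exp (-(q : ℝ) * p) = Real.exp (-p) ^ q := by
    rw [← Real.exp_nat_mul]
    ring_nf
  rw [hset, Measure.pi_pi, Finset.prod_const, Finset.card_univ, Fintype.card_fin, hexp,
    ENNReal.ofReal_pow (Real.exp_pos _).le]
  gcongr
  rw [prob_compl_eq_one_sub hs, tsub_le_iff_right]
  calc (1 : ENNReal) = ENNReal.ofReal 1 := ENNReal.ofReal_one.symm
    _ ≤ ENNReal.ofReal (Real.exp (-p) + p) :=
        ENNReal.ofReal_le_ofReal (by linarith [Real.add_one_le_exp (-p)])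
    _ ≤ ENNReal.ofReal (Real.exp (-p)) + ENNReal.ofReal p := ENNReal.ofReal_add_le
    _ ≤ ENNReal.ofReal (Real.exp (-p)) + μ s := by gcongr

theorem exists_nat_inv_mem_Icc {r : ℝ} (hr : r ∈ Set.Ioc (0 : ℝ) 1) :
    ∃ N : ℕ, 0 < N ∧ (N : ℝ) ≤ r⁻¹ ∧ r ≤ 1 / N ∧ 1 / (N : ℝ) ≤ 2 * r := by
  have hr0 := hr.1
  have hN : 0 < ⌊r⁻¹⌋₊ := Nat.floor_pos.2 ((one_le_inv₀ hr0).2 hr.2)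
  have hN1 : (1 : ℝ) ≤ (⌊r⁻¹⌋₊ : ℝ) := by exact_mod_cast hN
  have hle : (⌊r⁻¹⌋₊ : ℝ) ≤ r⁻¹ := Nat.floor_le (by positivity)
  refine ⟨_, hN, hle, ?_, ?_⟩
  · rw [one_div]
    exact (le_inv_comm₀ (by positivity) hr0).1 hle
  · have hlt := Nat.lt_floor_add_one r⁻¹
    have hmul : r⁻¹ * r = 1 := inv_mul_cancel₀ hr0.ne'
    rw [div_le_iff₀ (by positivity)]
    nlinarith

/-- Voronoi-cell diameter bound: for `q` i.i.d. points uniformly distributed on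
the unit cube in `ℝ^m` (with the Euclidean metric) and `r ∈ (0,1]`, with
probability at least `1 - r^{-m} exp(-q r^m)` every Voronoi cell of the sample,
intersected with the cube, has Euclidean diameter at most `4 √m · r`. -/
theorem voronoi_cell_diameter_bound
    (m q : ℕ) (hm : 1 ≤ m) (hq : 1 ≤ q) (r : ℝ) (hr : r ∈ Set.Ioc (0:ℝ) 1) :
    ENNReal.ofReal (1 - (r ^ m)⁻¹ * Real.exp (-(q : ℝ) * r ^ m)) ≤
      (Measure.pi fun _ : Fin q =>
          volume.restrict {x : EuclideanSpace ℝ (Fin m) | ∀ i, x i ∈ Set.Icc (0:ℝ) 1})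
        {ω : Fin q → EuclideanSpace ℝ (Fin m) |
          ∀ l : Fin q,
            Metric.diam
              ({x : EuclideanSpace ℝ (Fin m) | ∀ j : Fin q, dist x (ω l) ≤ dist x (ω j)}
                ∩ {x : EuclideanSpace ℝ (Fin m) | ∀ i, x i ∈ Set.Icc (0:ℝ) 1})
              ≤ 4 * Real.sqrt m * r} := by
  obtain ⟨N, hN, hNr, hrN, hNr2⟩ := exists_nat_inv_mem_Icc hr
  have hr0 := hr.1
  change _ ≤ (Measure.pi fun _ : Fin q => volume.restrict (EuclideanSpace.box 0 1)) _
  set μ : Measure (EuclideanSpace ℝ (Fin m)) := volume.restrict (EuclideanSpace.box 0 1) with hμ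
  have : IsProbabilityMeasure μ := ⟨by simp [hμ, EuclideanSpace.volume_box]⟩
  have hcell (k : Fin m → Fin N) :
      ENNReal.ofReal (r ^ m) ≤ μ (EuclideanSpace.gridCell N k) := by
    rw [hμ, Measure.restrict_eq_self _ (EuclideanSpace.gridCell_subset_unitCube hN k),
      EuclideanSpace.volume_gridCell, Fintype.card_fin]
    gcongr
  set bad : Set (Fin q → EuclideanSpace ℝ (Fin m)) :=
    ⋃ k : Fin m → Fin N, {ω | ∀ j, ω j ∉ EuclideanSpace.gridCell N k} with hbad
  have hbad_le : Measure.pi (fun _ : Fin q => μ) bad ≤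
      ENNReal.ofReal ((r ^ m)⁻¹ * Real.exp (-(q : ℝ) * r ^ m)) := by
    calc Measure.pi (fun _ : Fin q => μ) bad
        ≤ ∑ _k : Fin m → Fin N, ENNReal.ofReal (Real.exp (-(q : ℝ) * r ^ m)) :=
          (measure_iUnion_fintype_le _ _).trans <| Finset.sum_le_sum fun k _ =>
            μ.pi_forall_notMem_le q (EuclideanSpace.measurableSet_box _ _) (hcell k)
      _ = ENNReal.ofReal ((N : ℝ) ^ m * Real.exp (-(q : ℝ) * r ^ m)) := by
          rw [ENNReal.ofReal_mul (by positivity), ENNReal.ofReal_pow (by positivity)]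
          simp
      _ ≤ ENNReal.ofReal ((r ^ m)⁻¹ * Real.exp (-(q : ℝ) * r ^ m)) := by
          rw [← inv_pow]
          gcongr
  calc ENNReal.ofReal (1 - (r ^ m)⁻¹ * Real.exp (-(q : ℝ) * r ^ m))
      = 1 - ENNReal.ofReal ((r ^ m)⁻¹ * Real.exp (-(q : ℝ) * r ^ m)) := by
        rw [ENNReal.ofReal_sub _ (by positivity), ENNReal.ofReal_one]
    _ ≤ 1 - Measure.pi (fun _ : Fin q => μ) bad := tsub_le_tsub_left hbad_le _
    _ ≤ Measure.pi (fun _ : Fin q => μ) badᶜ := by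
        rw [tsub_le_iff_left, ← measure_univ (μ := Measure.pi fun _ : Fin q => μ),
          ← Set.union_compl_self bad]
        exact measure_union_le _ _
    _ ≤ _ := by
        refine measure_mono fun ω hω l => ?_
        have hω' : ∀ k : Fin m → Fin N, ∃ j, ω j ∈ EuclideanSpace.gridCell N k := by
          simpa [hbad] using hω
        refine (EuclideanSpace.diam_voronoi_inter_unitCube_le hN hω' l).trans ?_
        rw [Fintype.card_fin]
        nlinarith [mul_le_mul_of_nonneg_left hNr2 (Real.sqrt_nonneg m)]
end
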